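/- arXiv:math/0404017 — 6 statements merged into one kernel-verified Lean document; each statement's English description precedes it below -/
import Mathlib

section
/- Let E be a finite-dimensional real normed vector space, λ a continuous 1-form on E, φ : E → E a C¹ map, and σ : [0,1] → E a C¹ curve. Assume that for every k ≥ 1 the line integral of the pullback (φᵏ)*λ over the chain l₁ = (φ∘σ) − σ equals the line integral of λ over l₁; that is, for every k ≥ 1, ∫₀¹ λ(φᵏ(φ(σ(t))))((Dφᵏ)(φ(σ(t)))(d/dt φ(σ(t)))) dt − ∫₀¹ λ(φᵏ(σ(t)))((Dφᵏ)(σ(t))(σ'(t))) dt = I_λ(φ∘σ) − I_λ(σ), where φᵏ denotes the k-th iterate of φ. Then for every n ≥ 1 one has I_λ(φⁿ∘σ) − I_λ(σ) = n·(I_λ(φ∘σ) − I_λ(σ)). -/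
open intervalIntegral

/-- The line integral `∫₀¹ λ(c(t))(c'(t)) dt` of a continuous 1-form `λ` along a curve `c`. -/
noncomputable def lineIntegral {E : Type*} [NormedAddCommGroup E] [NormedSpace ℝ E]
    (lam : E → (E →L[ℝ] ℝ)) (c : ℝ → E) : ℝ :=
  ∫ t in (0:ℝ)..1, lam (c t) (deriv c t)

/-- The line integral `∫₀¹ λ(ψ(c(t)))((Dψ)(c(t))(c'(t))) dt` of the pullback `ψ*λ` along `c`. -/
noncomputable def pullbackLineIntegral {E : Type*} [NormedAddCommGroup E] [NormedSpace ℝ E]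
    (lam : E → (E →L[ℝ] ℝ)) (ψ : E → E) (c : ℝ → E) : ℝ :=
  ∫ t in (0:ℝ)..1, lam (ψ (c t)) (fderiv ℝ ψ (c t) (deriv c t))

section Pullback

variable {E : Type*} [NormedAddCommGroup E] [NormedSpace ℝ E] (lam : E → (E →L[ℝ] ℝ))

theorem pullbackLineIntegral_eq_lineIntegral_comp {ψ : E → E} {c : ℝ → E}
    (hψ : ∀ t ∈ Set.Ioo (0 : ℝ) 1, DifferentiableAt ℝ ψ (c t))
    (hc : DifferentiableOn ℝ c (Set.Ioo 0 1)) :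
    pullbackLineIntegral lam ψ c = lineIntegral lam (ψ ∘ c) := by
  refine integral_congr_Ioo_of_le zero_le_one fun t ht ↦ ?_
  have hct : DifferentiableAt ℝ c t := hc.differentiableAt (isOpen_Ioo.mem_nhds ht)
  exact congrArg (lam (ψ (c t))) (fderiv_comp_deriv t (hψ t ht) hct).symm

theorem pullbackLineIntegral_iterate_comp_sub {φ : E → E} (hφ : Differentiable ℝ φ)
    {σ : ℝ → E} (hσ : DifferentiableOn ℝ σ (Set.Ioo 0 1)) (k : ℕ) :
    pullbackLineIntegral lam φ^[k] (φ ∘ σ) - pullbackLineIntegral lam φ^[k] σ =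
      lineIntegral lam (φ^[k + 1] ∘ σ) - lineIntegral lam (φ^[k] ∘ σ) := by
  have hφk : Differentiable ℝ φ^[k] := hφ.iterate k
  rw [pullbackLineIntegral_eq_lineIntegral_comp lam (fun _ _ ↦ hφk _) (hφ.comp_differentiableOn hσ),
    pullbackLineIntegral_eq_lineIntegral_comp lam (fun _ _ ↦ hφk _) hσ,
    ← Function.comp_assoc, ← Function.iterate_succ]

theorem stmt_1_general {φ : E → E} (hφ : Differentiable ℝ φ)
    {σ : ℝ → E} (hσ : DifferentiableOn ℝ σ (Set.Ioo 0 1))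
    (hflux : ∀ k : ℕ, 1 ≤ k →
      pullbackLineIntegral lam φ^[k] (φ ∘ σ) - pullbackLineIntegral lam φ^[k] σ =
        lineIntegral lam (φ ∘ σ) - lineIntegral lam σ) (n : ℕ) :
    lineIntegral lam (φ^[n] ∘ σ) - lineIntegral lam σ =
      n * (lineIntegral lam (φ ∘ σ) - lineIntegral lam σ) := by
  have increment (k : ℕ) : lineIntegral lam (φ^[k + 1] ∘ σ) - lineIntegral lam (φ^[k] ∘ σ) =
      lineIntegral lam (φ ∘ σ) - lineIntegral lam σ := by
    rcases k.eq_zero_or_pos with rfl | hk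
    · rfl
    · rw [← pullbackLineIntegral_iterate_comp_sub lam hφ hσ k, hflux k hk]
  calc lineIntegral lam (φ^[n] ∘ σ) - lineIntegral lam σ
      = ∑ k ∈ Finset.range n,
          (lineIntegral lam (φ^[k + 1] ∘ σ) - lineIntegral lam (φ^[k] ∘ σ)) :=
        (Finset.sum_range_sub (fun k ↦ lineIntegral lam (φ^[k] ∘ σ)) n).symm
    _ = ∑ _k ∈ Finset.range n, (lineIntegral lam (φ ∘ σ) - lineIntegral lam σ) :=
        Finset.sum_congr rfl fun k _ ↦ increment k
    _ = n * (lineIntegral lam (φ ∘ σ) - lineIntegral lam σ) := by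
        rw [Finset.sum_const, Finset.card_range, nsmul_eq_mul]

end Pullback

/-- If for every `k ≥ 1` the integral of `(φᵏ)*λ` over the chain `l₁ = (φ∘σ) − σ` equals
the integral of `λ` over `l₁`, then `I_λ(φⁿ∘σ) − I_λ(σ) = n (I_λ(φ∘σ) − I_λ(σ))`. -/
theorem stmt_1 {E : Type*} [NormedAddCommGroup E] [NormedSpace ℝ E] [FiniteDimensional ℝ E]
    (lam : E → (E →L[ℝ] ℝ)) (hlam : Continuous lam)
    (φ : E → E) (hφ : ContDiff ℝ 1 φ)
    (σ : ℝ → E) (hσ : ContDiff ℝ 1 σ)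
    (hflux : ∀ k : ℕ, 1 ≤ k →
      pullbackLineIntegral lam (φ^[k]) (φ ∘ σ) - pullbackLineIntegral lam (φ^[k]) σ =
        lineIntegral lam (φ ∘ σ) - lineIntegral lam σ) :
    ∀ n : ℕ, 1 ≤ n →
      lineIntegral lam (φ^[n] ∘ σ) - lineIntegral lam σ =
        n * (lineIntegral lam (φ ∘ σ) - lineIntegral lam σ) := fun n _ ↦
  stmt_1_general lam (hφ.differentiable one_ne_zero)
    (hσ.differentiable one_ne_zero).differentiableOn hflux n
end

section
/- Let H : ℝ × (ℝ^d × ℝ^d) → ℝ be a smooth Hamiltonian with a smooth flow φ, and let σ : [0,1] → ℝ^d × ℝ^d be a C¹ curve. Let x(t) = φ(t,σ(0)) and y(t) = φ(t,σ(1)), t ∈ [0,1], be the flow trajectories of the endpoints of σ, and assume they are 1-periodic orbits, i.e. φ(1,σ(0)) = σ(0) and φ(1,σ(1)) = σ(1). Then the Liouville integral over the chain l₁ = (φ(1,·)∘σ) − σ equals the action difference: I(φ(1,·)∘σ) − I(σ) = 𝒜_H(y) − 𝒜_H(x). -/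
open intervalIntegral

/-- The Liouville line integral `I(c) = ∫₀¹ ⟨p(t), q'(t)⟩ dt` of a curve
`c(t) = (q(t), p(t))` in `ℝ^d × ℝ^d`. -/
noncomputable def liouvilleIntegral (d : ℕ)
    (c : ℝ → EuclideanSpace ℝ (Fin d) × EuclideanSpace ℝ (Fin d)) : ℝ :=
  ∫ t in (0:ℝ)..1, @inner ℝ _ _ ((c t).2) (deriv (fun s => (c s).1) t)

/-- The Hamiltonian vector field `X_H(t,(q,p)) = (∂_p H(t,q,p), −∂_q H(t,q,p))`. -/
noncomputable def hamVectorField (d : ℕ)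
    (H : ℝ × (EuclideanSpace ℝ (Fin d) × EuclideanSpace ℝ (Fin d)) → ℝ) (t : ℝ)
    (z : EuclideanSpace ℝ (Fin d) × EuclideanSpace ℝ (Fin d)) :
    EuclideanSpace ℝ (Fin d) × EuclideanSpace ℝ (Fin d) :=
  (gradient (fun p => H (t, (z.1, p))) z.2, - gradient (fun q => H (t, (q, z.2))) z.1)

/-- The symplectic action `𝒜_H(γ) = I(γ) − ∫₀¹ H(t,γ(t)) dt` of a curve `γ`. -/
noncomputable def symplecticAction (d : ℕ)
    (H : ℝ × (EuclideanSpace ℝ (Fin d) × EuclideanSpace ℝ (Fin d)) → ℝ)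
    (γ : ℝ → EuclideanSpace ℝ (Fin d) × EuclideanSpace ℝ (Fin d)) : ℝ :=
  liouvilleIntegral d γ - ∫ t in (0:ℝ)..1, H (t, γ t)

/-!
Let `(q, p)(t, s) = φ(t, σ(s))` be the surface swept out by `σ` along the flow. The pullback to it
of the Poincaré–Cartan form `p dq - H dt` is `⟪p, ∂ₛq⟫ ds + (⟪p, ∂ₜq⟫ - H) dt`, and this form is
closed by Hamilton's equations together with the symmetry of second derivatives. Its integral around
the boundary of the parameter rectangle therefore vanishes: the sides of constant `t` contribute the
difference of the Liouville integrals, the sides of constant `s` the difference of the actions.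
-/

open Function
open scoped RealInnerProductSpace

section ClosedForm

variable {G : Type*} [NormedAddCommGroup G] [NormedSpace ℝ G] [CompleteSpace G]

/-- Green's theorem on a rectangle for the closed form `f ds + g dt`. -/
theorem integral_sub_integral_eq_of_hasDerivAt {f g h : ℝ → ℝ → G}
    (hf : Continuous ↿f) (hg : Continuous ↿g) (hh : Continuous ↿h)
    (hft : ∀ t s, HasDerivAt (fun t => f t s) (h t s) t)
    (hgs : ∀ t s, HasDerivAt (g t) (h t s) s) (a b c d : ℝ) :
    (∫ s in c..d, f b s) - ∫ s in c..d, f a s = (∫ t in a..b, g t d) - ∫ t in a..b, g t c := by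
  have hf_left (t : ℝ) : Continuous (f t) := by fun_prop
  have hg_right (s : ℝ) : Continuous fun t => g t s := by fun_prop
  have hh_left (t : ℝ) : Continuous (h t) := by fun_prop
  have hh_right (s : ℝ) : Continuous fun t => h t s := by fun_prop
  have hh_int : MeasureTheory.IntegrableOn (uncurry h) (Set.uIoc a b ×ˢ Set.uIoc c d) :=
    (hh.continuousOn.integrableOn_compact (isCompact_uIcc.prod isCompact_uIcc)).mono_set
      (Set.prod_mono Set.uIoc_subset_uIcc Set.uIoc_subset_uIcc)
  calc (∫ s in c..d, f b s) - ∫ s in c..d, f a s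
      = ∫ s in c..d, (f b s - f a s) :=
        (integral_sub ((hf_left b).intervalIntegrable _ _)
          ((hf_left a).intervalIntegrable _ _)).symm
    _ = ∫ s in c..d, ∫ t in a..b, h t s :=
        integral_congr fun s _ => (integral_eq_sub_of_hasDerivAt (fun t _ => hft t s)
          ((hh_right s).intervalIntegrable _ _)).symm
    _ = ∫ t in a..b, ∫ s in c..d, h t s :=
        (MeasureTheory.intervalIntegral_intervalIntegral_swap hh_int).symm
    _ = ∫ t in a..b, (g t d - g t c) :=
        integral_congr fun t _ => integral_eq_sub_of_hasDerivAt (fun s _ => hgs t s)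
          ((hh_left t).intervalIntegrable _ _)
    _ = (∫ t in a..b, g t d) - ∫ t in a..b, g t c :=
        integral_sub ((hg_right d).intervalIntegrable _ _) ((hg_right c).intervalIntegrable _ _)

end ClosedForm

section SweptSurface

variable {V F : Type*} [NormedAddCommGroup V] [NormedSpace ℝ V]
  [NormedAddCommGroup F] [NormedSpace ℝ F] {φ : ℝ × V → F} {σ : ℝ → V}

/-- The mixed second partial derivative `∂ₜ∂ₛ` of the surface `(t, s) ↦ φ (t, σ s)`, expressed
through the second derivative of `φ` since the surface need not be `C²` when `σ` is only `C¹`. -/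
noncomputable def mixedPartial (φ : ℝ × V → F) (σ : ℝ → V) (t s : ℝ) : F :=
  fderiv ℝ (fderiv ℝ φ) (t, σ s) (1, 0) (0, deriv σ s)

theorem hasDerivAt_comp_mk_left {t : ℝ} {v : V} (hφ : DifferentiableAt ℝ φ (t, v)) :
    HasDerivAt (fun t => φ (t, v)) (fderiv ℝ φ (t, v) (1, 0)) t :=
  hφ.hasFDerivAt.comp_hasDerivAt t ((hasDerivAt_id t).prodMk (hasDerivAt_const t v))

theorem hasDerivAt_comp_mk_right {t s : ℝ} (hφ : DifferentiableAt ℝ φ (t, σ s))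
    (hσ : DifferentiableAt ℝ σ s) :
    HasDerivAt (fun s => φ (t, σ s)) (fderiv ℝ φ (t, σ s) (0, deriv σ s)) s :=
  hφ.hasFDerivAt.comp_hasDerivAt s ((hasDerivAt_const s t).prodMk hσ.hasDerivAt)

theorem hasDerivAt_deriv_comp_mk_right {s : ℝ} (hφ : ContDiff ℝ 2 φ) (hσ : DifferentiableAt ℝ σ s)
    (t : ℝ) :
    HasDerivAt (fun t => deriv (fun s => φ (t, σ s)) s) (mixedPartial φ σ t s) t := by
  have hφ' : Differentiable ℝ (fderiv ℝ φ) := (hφ.fderiv_right le_rfl).differentiable one_ne_zero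
  have hderiv (t : ℝ) :
      deriv (fun s => φ (t, σ s)) s = fderiv ℝ φ (t, σ s) (0, deriv σ s) :=
    (hasDerivAt_comp_mk_right (hφ.differentiable two_ne_zero _) hσ).deriv
  simpa only [hderiv, mixedPartial, map_zero, add_zero] using
    (hasDerivAt_comp_mk_left (hφ' (t, σ s))).clm_apply (hasDerivAt_const t (0, deriv σ s))

theorem hasDerivAt_deriv_comp_mk_left (hφ : ContDiff ℝ 2 φ) (hσ : Differentiable ℝ σ) (t s : ℝ) :
    HasDerivAt (fun s => deriv (fun t => φ (t, σ s)) t) (mixedPartial φ σ t s) s := by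
  have hφ' : Differentiable ℝ (fderiv ℝ φ) := (hφ.fderiv_right le_rfl).differentiable one_ne_zero
  have hderiv (s : ℝ) : deriv (fun t => φ (t, σ s)) t = fderiv ℝ φ (t, σ s) (1, 0) :=
    (hasDerivAt_comp_mk_left (hφ.differentiable two_ne_zero _)).deriv
  have hsymm : mixedPartial φ σ t s = fderiv ℝ (fderiv ℝ φ) (t, σ s) (0, deriv σ s) (1, 0) :=
    hφ.contDiffAt.isSymmSndFDerivAt (by simp) _ _
  simpa only [hderiv, hsymm, map_zero, add_zero] using
    (hasDerivAt_comp_mk_right (hφ' (t, σ s)) (hσ s)).clm_apply (hasDerivAt_const s (1, 0))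

theorem continuous_deriv_comp_mk_left (hφ : ContDiff ℝ 1 φ) (hσ : Continuous σ) :
    Continuous fun u : ℝ × ℝ => deriv (fun t => φ (t, σ u.2)) u.1 := by
  have hderiv (u : ℝ × ℝ) :
      deriv (fun t => φ (t, σ u.2)) u.1 = fderiv ℝ φ (u.1, σ u.2) (1, 0) :=
    (hasDerivAt_comp_mk_left (hφ.differentiable one_ne_zero _)).deriv
  have : Continuous (fderiv ℝ φ) := hφ.continuous_fderiv one_ne_zero
  simp only [hderiv]
  fun_prop

theorem continuous_deriv_comp_mk_right (hφ : ContDiff ℝ 1 φ) (hσ : ContDiff ℝ 1 σ) :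
    Continuous fun u : ℝ × ℝ => deriv (fun s => φ (u.1, σ s)) u.2 := by
  have hderiv (u : ℝ × ℝ) :
      deriv (fun s => φ (u.1, σ s)) u.2 = fderiv ℝ φ (u.1, σ u.2) (0, deriv σ u.2) :=
    (hasDerivAt_comp_mk_right (hφ.differentiable one_ne_zero _)
      (hσ.differentiable one_ne_zero _)).deriv
  have : Continuous (fderiv ℝ φ) := hφ.continuous_fderiv one_ne_zero
  have : Continuous (deriv σ) := hσ.continuous_deriv le_rfl
  simp only [hderiv]
  fun_prop

theorem continuous_mixedPartial (hφ : ContDiff ℝ 2 φ) (hσ : ContDiff ℝ 1 σ) :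
    Continuous fun u : ℝ × ℝ => mixedPartial φ σ u.1 u.2 := by
  have : Continuous (fderiv ℝ (fderiv ℝ φ)) :=
    (hφ.fderiv_right le_rfl).continuous_fderiv one_ne_zero
  have : Continuous (deriv σ) := hσ.continuous_deriv le_rfl
  unfold mixedPartial
  fun_prop

end SweptSurface

section Components

variable {E F : Type*} [NormedAddCommGroup E] [NormedSpace ℝ E]
  [NormedAddCommGroup F] [NormedSpace ℝ F] {f : ℝ → E × F} {t : ℝ}

theorem deriv_fst_comp (hf : DifferentiableAt ℝ f t) :
    deriv (fun s => (f s).1) t = (deriv f t).1 :=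
  ((ContinuousLinearMap.fst ℝ E F).hasFDerivAt.comp_hasDerivAt t hf.hasDerivAt).deriv

theorem deriv_snd_comp (hf : DifferentiableAt ℝ f t) :
    deriv (fun s => (f s).2) t = (deriv f t).2 :=
  ((ContinuousLinearMap.snd ℝ E F).hasFDerivAt.comp_hasDerivAt t hf.hasDerivAt).deriv

end Components

section Gradient

variable {E F : Type*} [NormedAddCommGroup E] [InnerProductSpace ℝ E] [CompleteSpace E]
  [NormedAddCommGroup F] [InnerProductSpace ℝ F] [CompleteSpace F]

theorem fderiv_prod_apply_eq_inner_gradient {f : E × F → ℝ} {z : E × F}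
    (hf : DifferentiableAt ℝ f z) (w : E × F) :
    fderiv ℝ f z w = ⟪gradient (fun x => f (x, z.2)) z.1, w.1⟫ +
      ⟪gradient (fun y => f (z.1, y)) z.2, w.2⟫ := by
  have hfst : HasFDerivAt (fun x => f (x, z.2)) (fderiv ℝ f z ∘L .inl ℝ E F) z.1 :=
    hf.hasFDerivAt.comp z.1 (hasFDerivAt_prodMk_left z.1 z.2)
  have hsnd : HasFDerivAt (fun y => f (z.1, y)) (fderiv ℝ f z ∘L .inr ℝ E F) z.2 :=
    hf.hasFDerivAt.comp z.2 (hasFDerivAt_prodMk_right z.1 z.2)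
  simp [inner_gradient_left, hfst.fderiv, hsnd.fderiv, ← map_add]

end Gradient

section Hamiltonian

variable {E V : Type*} [NormedAddCommGroup E] [InnerProductSpace ℝ E]
  [NormedAddCommGroup V] [NormedSpace ℝ V]
  {H : ℝ × (E × E) → ℝ} {φ : ℝ × V → E × E} {σ : ℝ → V}

/-- The Liouville line integral `∫ ⟨p, dq⟩` over `[a, b]` of a curve `c = (q, p)` in the phase space
`E × E`. -/
noncomputable def liouvilleIntegralOn (c : ℝ → E × E) (a b : ℝ) : ℝ :=
  ∫ t in a..b, ⟪(c t).2, deriv (fun s => (c s).1) t⟫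

/-- The symplectic action `∫ ⟨p, dq⟩ - H dt` over `[a, b]` of a curve in the phase space `E × E`. -/
noncomputable def symplecticActionOn (H : ℝ × (E × E) → ℝ) (γ : ℝ → E × E) (a b : ℝ) : ℝ :=
  liouvilleIntegralOn γ a b - ∫ t in a..b, H (t, γ t)

theorem symplecticActionOn_eq_integral {γ : ℝ → E × E} (hH : Continuous H) (hγ : ContDiff ℝ 1 γ)
    (a b : ℝ) :
    symplecticActionOn H γ a b =
      ∫ t in a..b, (⟪(γ t).2, deriv (fun s => (γ s).1) t⟫ - H (t, γ t)) := by
  have : Continuous γ := hγ.continuous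
  have : Continuous (deriv fun s => (γ s).1) := hγ.fst.continuous_deriv le_rfl
  exact (integral_sub (Continuous.intervalIntegrable (by fun_prop) _ _)
    (Continuous.intervalIntegrable (by fun_prop) _ _)).symm

theorem hasDerivAt_inner_deriv {s : ℝ} (hφ : ContDiff ℝ 2 φ) (hσ : DifferentiableAt ℝ σ s) (t : ℝ) :
    HasDerivAt (fun t => ⟪(φ (t, σ s)).2, deriv (fun s => (φ (t, σ s)).1) s⟫)
      (⟪(φ (t, σ s)).2, mixedPartial (fun u => (φ u).1) σ t s⟫ +
        ⟪deriv (fun t => (φ (t, σ s)).2) t, deriv (fun s => (φ (t, σ s)).1) s⟫) t := by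
  have hφ' : Differentiable ℝ φ := hφ.differentiable two_ne_zero
  have hp : HasDerivAt (fun t => (φ (t, σ s)).2) (deriv (fun t => (φ (t, σ s)).2) t) t :=
    DifferentiableAt.hasDerivAt (by fun_prop)
  exact hp.inner ℝ (hasDerivAt_deriv_comp_mk_right hφ.fst hσ t)

variable [CompleteSpace E]

/-- The Hamiltonian vector field `(∂_p H, -∂_q H)` at time `t` on the phase space `E × E`. -/
noncomputable def hamiltonianVectorField (H : ℝ × (E × E) → ℝ) (t : ℝ) (z : E × E) : E × E :=
  (gradient (fun p => H (t, (z.1, p))) z.2, -gradient (fun q => H (t, (q, z.2))) z.1)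

theorem fderiv_apply_eq_inner_hamiltonianVectorField {t : ℝ} {z : E × E}
    (hH : DifferentiableAt ℝ (fun z => H (t, z)) z) (w : E × E) :
    fderiv ℝ (fun z => H (t, z)) z w =
      ⟪w.2, (hamiltonianVectorField H t z).1⟫ - ⟪(hamiltonianVectorField H t z).2, w.1⟫ := by
  rw [fderiv_prod_apply_eq_inner_gradient hH, real_inner_comm w.2]
  simp only [hamiltonianVectorField, inner_neg_left]
  ring

theorem hasDerivAt_hamiltonian_comp {z : ℝ → ℝ → E × E} {t s : ℝ}
    (hH : DifferentiableAt ℝ (fun w => H (t, w)) (z t s))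
    (hflow : deriv (fun t => z t s) t = hamiltonianVectorField H t (z t s))
    (hzt : DifferentiableAt ℝ (fun t => z t s) t) (hzs : DifferentiableAt ℝ (z t) s) :
    HasDerivAt (fun s => H (t, z t s))
      (⟪deriv (fun s => (z t s).2) s, deriv (fun t => (z t s).1) t⟫ -
        ⟪deriv (fun t => (z t s).2) t, deriv (fun s => (z t s).1) s⟫) s := by
  have hcomp := hH.hasFDerivAt.comp_hasDerivAt s hzs.hasDerivAt
  rw [fderiv_apply_eq_inner_hamiltonianVectorField hH, ← hflow] at hcomp
  rwa [deriv_fst_comp hzt, deriv_snd_comp hzt, deriv_fst_comp hzs, deriv_snd_comp hzs]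

theorem hasDerivAt_inner_deriv_sub_hamiltonian {t s : ℝ}
    (hH : DifferentiableAt ℝ (fun w => H (t, w)) (φ (t, σ s))) (hφ : ContDiff ℝ 2 φ)
    (hflow : deriv (fun t => φ (t, σ s)) t = hamiltonianVectorField H t (φ (t, σ s)))
    (hσ : Differentiable ℝ σ) :
    HasDerivAt (fun s => ⟪(φ (t, σ s)).2, deriv (fun t => (φ (t, σ s)).1) t⟫ - H (t, φ (t, σ s)))
      (⟪(φ (t, σ s)).2, mixedPartial (fun u => (φ u).1) σ t s⟫ +
        ⟪deriv (fun t => (φ (t, σ s)).2) t, deriv (fun s => (φ (t, σ s)).1) s⟫) s := by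
  have hφ' : Differentiable ℝ φ := hφ.differentiable two_ne_zero
  have hp : HasDerivAt (fun s => (φ (t, σ s)).2) (deriv (fun s => (φ (t, σ s)).2) s) s :=
    DifferentiableAt.hasDerivAt (by fun_prop)
  have hpq := hp.inner ℝ (hasDerivAt_deriv_comp_mk_left hφ.fst hσ t s)
  have hHφ := hasDerivAt_hamiltonian_comp (z := fun t s => φ (t, σ s)) hH hflow
    (by fun_prop) (by fun_prop)
  exact (hpq.sub hHφ).congr_deriv (by ring)

theorem stmt_2_general (hH : Differentiable ℝ H) (hφ : ContDiff ℝ 2 φ)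
    (hflow : ∀ t v, deriv (fun s => φ (s, v)) t = hamiltonianVectorField H t (φ (t, v)))
    (hσ : ContDiff ℝ 1 σ) (a b c d : ℝ) :
    liouvilleIntegralOn (fun s => φ (b, σ s)) c d - liouvilleIntegralOn (fun s => φ (a, σ s)) c d =
      symplecticActionOn H (fun t => φ (t, σ d)) a b -
        symplecticActionOn H (fun t => φ (t, σ c)) a b := by
  have hφ₁ : ContDiff ℝ 1 φ := hφ.of_le one_le_two
  have hσ' : Differentiable ℝ σ := hσ.differentiable one_ne_zero
  have hφ_cont : Continuous fun u : ℝ × ℝ => φ (u.1, σ u.2) := by fun_prop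
  have hqt := continuous_deriv_comp_mk_left hφ₁.fst hσ.continuous
  have hpt := continuous_deriv_comp_mk_left hφ₁.snd hσ.continuous
  have hqs := continuous_deriv_comp_mk_right hφ₁.fst hσ
  have hqts := continuous_mixedPartial hφ.fst hσ
  have horbit (v : V) : ContDiff ℝ 1 fun t => φ (t, v) := by fun_prop
  rw [symplecticActionOn_eq_integral hH.continuous (horbit _),
    symplecticActionOn_eq_integral hH.continuous (horbit _)]
  exact integral_sub_integral_eq_of_hasDerivAt
    (hφ_cont.snd.inner hqs)
    ((hφ_cont.snd.inner hqt).sub (hH.continuous.comp (continuous_fst.prodMk hφ_cont)))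
    ((hφ_cont.snd.inner hqts).add (hpt.inner hqs))
    (fun t s => hasDerivAt_inner_deriv hφ (hσ' s) t)
    (fun t s => hasDerivAt_inner_deriv_sub_hamiltonian (by fun_prop) hφ (hflow t (σ s)) hσ') a b c d

end Hamiltonian

/-- If the endpoints of the curve `σ` lie on 1-periodic orbits `x`, `y` of the Hamiltonian
flow `φ` of `H`, then `I(φ(1,·)∘σ) − I(σ) = 𝒜_H(y) − 𝒜_H(x)`. -/
theorem stmt_2 (d : ℕ)
    (H : ℝ × (EuclideanSpace ℝ (Fin d) × EuclideanSpace ℝ (Fin d)) → ℝ)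
    (φ : ℝ × (EuclideanSpace ℝ (Fin d) × EuclideanSpace ℝ (Fin d)) →
      EuclideanSpace ℝ (Fin d) × EuclideanSpace ℝ (Fin d))
    (hH : ContDiff ℝ (⊤ : ℕ∞) H) (hφ : ContDiff ℝ (⊤ : ℕ∞) φ)
    (hφ0 : ∀ z, φ (0, z) = z)
    (hφflow : ∀ t z, deriv (fun s => φ (s, z)) t = hamVectorField d H t (φ (t, z)))
    (σ : ℝ → EuclideanSpace ℝ (Fin d) × EuclideanSpace ℝ (Fin d)) (hσ : ContDiff ℝ 1 σ)
    (hx : φ (1, σ 0) = σ 0) (hy : φ (1, σ 1) = σ 1) :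
    liouvilleIntegral d (fun t => φ (1, σ t)) - liouvilleIntegral d σ =
      symplecticAction d H (fun t => φ (t, σ 1)) -
        symplecticAction d H (fun t => φ (t, σ 0)) := by
  have hgeneral :=
    stmt_2_general (hH.differentiable (by simp)) (contDiff_infty.mp hφ 2) hφflow hσ 0 1 0 1
  simp only [hφ0] at hgeneral
  exact hgeneral
end

section
/- Let d ≥ 1, R > 0, c > 0, and let n ≥ 1 be an integer with n ≥ 4R². Let γ : [0,1] → ℝ^d × ℝ^d be a C¹ loop (γ(1) = γ(0)) whose base point satisfies ‖p(γ(0))‖ ≤ R, where p denotes the second component, and whose Liouville integral satisfies I(γ) = n·c. Then the length of γ satisfies ∫₀¹ ‖γ'(t)‖ dt ≥ min(c,1)·√n. -/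
open intervalIntegral

/-!
Put `K = √N`. If `‖p‖ ≤ K` along the curve, Cauchy–Schwarz gives `|∫ p dq| ≤ K · length`, and an
integral of at least `N c = K² c` forces length at least `K c`. Otherwise the curve climbs from
height `‖p‖ ≤ R` to above `K` and back; since `‖p‖` is 1-Lipschitz, this costs length at least
`2 (K - R) ≥ K`.

The product carries the max norm, so `‖γ'‖` is at most the Euclidean speed and the bound for
`∫ ‖γ'‖` implies the one for the Euclidean length.
-/

open Set MeasureTheory

theorem norm_deriv_fst_le {𝕜 E F : Type*} [NontriviallyNormedField 𝕜]
    [NormedAddCommGroup E] [NormedSpace 𝕜 E] [NormedAddCommGroup F] [NormedSpace 𝕜 F]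
    {f : 𝕜 → E × F} {x : 𝕜} (hf : DifferentiableAt 𝕜 f x) :
    ‖deriv (fun y => (f y).1) x‖ ≤ ‖deriv f x‖ := by
  have h_deriv : deriv (fun y => (f y).1) x = (deriv f x).1 :=
    ((ContinuousLinearMap.fst 𝕜 E F).hasFDerivAt.comp_hasDerivAt x hf.hasDerivAt).deriv
  rw [h_deriv]
  exact norm_fst_le _

section Curve

variable {E : Type*} [NormedAddCommGroup E] {a b t K R : ℝ} {L : NNReal}

theorem dist_comp_le_mul_integral_norm_deriv_of_lipschitzWith [NormedSpace ℝ E] {X : Type*}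
    [PseudoMetricSpace X] {h : E → X} (hh : LipschitzWith L h) {γ : ℝ → E} (hab : a ≤ b)
    (hcont : ContinuousOn γ (Icc a b)) (hdiff : DifferentiableOn ℝ γ (Ioo a b))
    (hint : IntervalIntegrable (fun s => ‖deriv γ s‖) volume a b) :
    dist (h (γ a)) (h (γ b)) ≤ L * ∫ s in a..b, ‖deriv γ s‖ :=
  calc dist (h (γ a)) (h (γ b)) ≤ L * ‖γ b - γ a‖ := by
        simpa only [dist_eq_norm'] using hh.dist_le_mul (γ a) (γ b)
    _ ≤ L * ∫ s in a..b, ‖deriv γ s‖ := by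
        gcongr
        exact norm_sub_le_integral_of_norm_deriv_le_of_le hab hcont hdiff
          (.of_forall fun _ _ => le_rfl) hint

theorem two_mul_sub_le_mul_integral_norm_deriv_of_lipschitzWith [NormedSpace ℝ E] {h : E → ℝ}
    (hh : LipschitzWith L h) {γ : ℝ → E} (hcont : ContinuousOn γ (Icc a b))
    (hdiff : DifferentiableOn ℝ γ (Ioo a b))
    (hint : IntervalIntegrable (fun s => ‖deriv γ s‖) volume a b) (ht : t ∈ Icc a b)
    (ha : h (γ a) ≤ R) (hb : h (γ b) ≤ R) :
    2 * (h (γ t) - R) ≤ L * ∫ s in a..b, ‖deriv γ s‖ := by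
  have hint_left : IntervalIntegrable (fun s => ‖deriv γ s‖) volume a t :=
    hint.mono_set (uIcc_subset_uIcc_left (Icc_subset_uIcc ht))
  have hint_right : IntervalIntegrable (fun s => ‖deriv γ s‖) volume t b :=
    hint.mono_set (uIcc_subset_uIcc_right (Icc_subset_uIcc ht))
  have ascent : h (γ t) - h (γ a) ≤ L * ∫ s in a..t, ‖deriv γ s‖ :=
    (Real.sub_le_dist _ _).trans <| dist_comm (h (γ a)) _ ▸
      dist_comp_le_mul_integral_norm_deriv_of_lipschitzWith hh ht.1
        (hcont.mono (Icc_subset_Icc_right ht.2)) (hdiff.mono (Ioo_subset_Ioo_right ht.2)) hint_left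
  have descent : h (γ t) - h (γ b) ≤ L * ∫ s in t..b, ‖deriv γ s‖ :=
    (Real.sub_le_dist _ _).trans <|
      dist_comp_le_mul_integral_norm_deriv_of_lipschitzWith hh ht.2
        (hcont.mono (Icc_subset_Icc_left ht.1)) (hdiff.mono (Ioo_subset_Ioo_left ht.1)) hint_right
  calc 2 * (h (γ t) - R) ≤ (h (γ t) - h (γ a)) + (h (γ t) - h (γ b)) := by linarith
    _ ≤ L * (∫ s in a..t, ‖deriv γ s‖) + L * ∫ s in t..b, ‖deriv γ s‖ :=
        add_le_add ascent descent
    _ = L * ∫ s in a..b, ‖deriv γ s‖ := by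
        rw [← mul_add, intervalIntegral.integral_add_adjacent_intervals hint_left hint_right]

variable [InnerProductSpace ℝ E] {γ : ℝ → E × E}

theorem abs_integral_inner_deriv_fst_le (hab : a ≤ b) (hdiff : DifferentiableOn ℝ γ (Ioo a b))
    (hint : IntervalIntegrable (fun s => ‖deriv γ s‖) volume a b)
    (hK : ∀ s ∈ Ioo a b, ‖(γ s).2‖ ≤ K) :
    |∫ s in a..b, inner ℝ (γ s).2 (deriv (fun r => (γ r).1) s)| ≤
      K * ∫ s in a..b, ‖deriv γ s‖ := by
  have pointwise : ∀ s ∈ Ioo a b,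
      ‖inner ℝ (γ s).2 (deriv (fun r => (γ r).1) s)‖ ≤ K * ‖deriv γ s‖ := fun s hs =>
    calc ‖inner ℝ (γ s).2 (deriv (fun r => (γ r).1) s)‖
        ≤ ‖(γ s).2‖ * ‖deriv (fun r => (γ r).1) s‖ := norm_inner_le_norm _ _
      _ ≤ K * ‖deriv γ s‖ := by
          gcongr
          · exact (norm_nonneg _).trans (hK s hs)
          · exact hK s hs
          · exact norm_deriv_fst_le (hdiff.differentiableAt (Ioo_mem_nhds hs.1 hs.2))
  rw [← intervalIntegral.integral_const_mul, ← Real.norm_eq_abs]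
  refine intervalIntegral.norm_integral_le_of_norm_le hab ?_ (hint.const_mul K)
  filter_upwards [Measure.ae_ne volume b] with s hsb hs
  exact pointwise s ⟨hs.1, hs.2.lt_of_ne hsb⟩

theorem stmt_4_general {c N : ℝ} (hab : a ≤ b) (hN : 0 < N) (hRN : 4 * R ^ 2 ≤ N)
    (hcont : ContinuousOn γ (Icc a b)) (hdiff : DifferentiableOn ℝ γ (Ioo a b))
    (hint : IntervalIntegrable (fun s => ‖deriv γ s‖) volume a b)
    (ha : ‖(γ a).2‖ ≤ R) (hb : ‖(γ b).2‖ ≤ R)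
    (hI : N * c ≤ |∫ s in a..b, inner ℝ (γ s).2 (deriv (fun r => (γ r).1) s)|) :
    min c 1 * √N ≤ ∫ s in a..b, ‖deriv γ s‖ := by
  by_cases hp : ∀ s ∈ Ioo a b, ‖(γ s).2‖ ≤ √N
  · have h_action : √N * (c * √N) ≤ √N * ∫ s in a..b, ‖deriv γ s‖ :=
      calc √N * (c * √N) = N * c := by rw [mul_left_comm, Real.mul_self_sqrt hN.le, mul_comm]
        _ ≤ _ := hI.trans (abs_integral_inner_deriv_fst_le hab hdiff hint hp)
    calc min c 1 * √N ≤ c * √N := by gcongr; exact min_le_left c 1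
      _ ≤ _ := le_of_mul_le_mul_left h_action (Real.sqrt_pos.mpr hN)
  · push Not at hp
    obtain ⟨t, ht, h_escape⟩ := hp
    have h_two_R : 2 * R ≤ √N := Real.le_sqrt_of_sq_le (by linarith [mul_pow 2 R 2])
    have h_height : LipschitzWith 1 fun z : E × E => ‖z.2‖ := by
      simpa [Function.comp_def] using
        lipschitzWith_one_norm.comp (LipschitzWith.prod_snd (α := E) (β := E))
    calc min c 1 * √N ≤ 1 * √N := by gcongr; exact min_le_right c 1
      _ ≤ 2 * (‖(γ t).2‖ - R) := by linarith
      _ ≤ _ := by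
          simpa only [NNReal.coe_one, one_mul] using
            two_mul_sub_le_mul_integral_norm_deriv_of_lipschitzWith h_height hcont hdiff hint
              (Ioo_subset_Icc_self ht) ha hb

end Curve

/-- A C¹ loop `γ` in `ℝ^d × ℝ^d` whose base point satisfies `‖p(γ(0))‖ ≤ R` and whose
Liouville integral equals `n·c`, where `n ≥ max(1, 4R²)`, has length at least
`min(c,1)·√n`. -/
theorem stmt_4 (d : ℕ) (hd : 1 ≤ d) (R c : ℝ) (hR : 0 < R) (hc : 0 < c)
    (n : ℕ) (hn : 1 ≤ n) (hn4 : 4 * R ^ 2 ≤ (n : ℝ))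
    (γ : ℝ → EuclideanSpace ℝ (Fin d) × EuclideanSpace ℝ (Fin d)) (hγ : ContDiff ℝ 1 γ)
    (hloop : γ 1 = γ 0)
    (hbase : ‖(γ 0).2‖ ≤ R)
    (hI : liouvilleIntegral d γ = n * c) :
    min c 1 * Real.sqrt n ≤ ∫ t in (0:ℝ)..1, ‖deriv γ t‖ := by
  exact stmt_4_general zero_le_one (Nat.cast_pos.mpr hn) hn4 hγ.continuous.continuousOn
    (hγ.differentiable one_ne_zero).differentiableOn
    ((hγ.continuous_deriv le_rfl).norm.intervalIntegrable 0 1) hbase (hloop ▸ hbase)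
    (hI.symm.le.trans (le_abs_self _))
end

section
/- Let H : ℝ × (ℝ^d × ℝ^d) → ℝ be a smooth Hamiltonian, 1-periodic in time, with H(t,z) = 0 for all t whenever z lies outside a compact set K. Let φ be a smooth flow of H satisfying the cocycle identity φ(t+1,z) = φ(t,φ(1,z)) and satisfying φ(t,z) = z for all t whenever z ∉ K, and let ψ = φ(1,·). Let x₀ and y₀ be fixed points of ψ whose 1-periodic orbits x(t) = φ(t,x₀), y(t) = φ(t,y₀), t ∈ [0,1], satisfy c := 𝒜_H(y) − 𝒜_H(x) > 0, and let σ : [0,1] → ℝ^d × ℝ^d be a C¹ curve with σ(0) = x₀ and σ(1) = y₀. Then there exist a > 0 and b ≥ 0 such that for every n ≥ 1 the length of ψⁿ∘σ satisfies ∫₀¹ ‖(ψⁿ∘σ)'(t)‖ dt ≥ a·n − b; in particular the length of ψⁿ∘σ grows at least linearly in n. -/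
open intervalIntegral

/-!
Write `φ = (q, p)` and `λ = p·dq`. Since `φ^* dλ = d(φ^* λ)`, Hamilton's equations give
`∂_t ⟨p, ∂_v q⟩ = ∂_v (⟨p, ∂_t q⟩ - H(t, φ))` for every phase space direction `v`. Integrating over
the square swept out by a curve `c` shows that the time-one map `ψ` changes the Liouville integral
of `c` by the difference of the actions of the orbits through `c 1` and `c 0`. If both endpoints are
fixed by `ψ`, this difference is the same at every iteration, so the Liouville integral of `ψⁿ ∘ c`
is affine in `n`. It is also at most a bound for `p` times the length of `ψⁿ ∘ c`, and a map that is
the identity off a compact set keeps that bound independent of `n`.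
-/

open scoped RealInnerProductSpace

section Calculus

variable {V W G : Type*} [NormedAddCommGroup V] [NormedSpace ℝ V] [NormedAddCommGroup W]
  [NormedSpace ℝ W] [NormedAddCommGroup G] [NormedSpace ℝ G]

lemma hasDerivAt_comp_prodMk_const {f : ℝ × V → G} {t : ℝ} {z : V}
    (hf : DifferentiableAt ℝ f (t, z)) :
    HasDerivAt (fun s => f (s, z)) (fderiv ℝ f (t, z) (1, 0)) t :=
  hf.hasFDerivAt.comp_hasDerivAt t ((hasDerivAt_id t).prodMk (hasDerivAt_const t z))

lemma hasDerivAt_comp_const_prodMk {f : W × V → G} {t : W} {c : ℝ → V} {v : V} {s : ℝ}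
    (hf : DifferentiableAt ℝ f (t, c s)) (hc : HasDerivAt c v s) :
    HasDerivAt (fun r => f (t, c r)) (fderiv ℝ f (t, c s) (0, v)) s :=
  hf.hasFDerivAt.comp_hasDerivAt s ((hasDerivAt_const s t).prodMk hc)

lemma fderiv_comp_const_prodMk {f : W × V → G} {t : W} {z : V}
    (hf : DifferentiableAt ℝ f (t, z)) (v : V) :
    fderiv ℝ (fun w => f (t, w)) z v = fderiv ℝ f (t, z) (0, v) := by
  have hslice : HasFDerivAt (fun w => f (t, w)) _ z :=
    hf.hasFDerivAt.comp z (hasFDerivAt_prodMk_right t z)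
  simp [hslice.fderiv]

lemma fderiv_comp_prodMk_const {f : W × V → G} {t : W} {z : V}
    (hf : DifferentiableAt ℝ f (t, z)) (w : W) :
    fderiv ℝ (fun s => f (s, z)) t w = fderiv ℝ f (t, z) (w, 0) := by
  have hslice : HasFDerivAt (fun s => f (s, z)) _ t :=
    hf.hasFDerivAt.comp t (hasFDerivAt_prodMk_left t z)
  simp [hslice.fderiv]

lemma contDiff_iterate {k : WithTop ℕ∞} {f : V → V} (hf : ContDiff ℝ k f) (n : ℕ) :
    ContDiff ℝ k f^[n] :=
  n.rec contDiff_id fun _ ih => ih.comp hf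

lemma intervalIntegral_sub_eq_of_hasDerivAt [CompleteSpace G] {P Q R : ℝ → ℝ → G} {a b c d : ℝ}
    (hP : ∀ s t, HasDerivAt (P s) (R s t) t) (hQ : ∀ s t, HasDerivAt (fun r => Q r t) (R s t) s)
    (hR : Continuous (Function.uncurry R)) :
    ∫ s in a..b, (P s d - P s c) = ∫ t in c..d, (Q b t - Q a t) := by
  have inner_left (s : ℝ) : ∫ t in c..d, R s t = P s d - P s c :=
    integral_eq_sub_of_hasDerivAt (fun t _ => hP s t)
      (Continuous.intervalIntegrable (by fun_prop) _ _)
  have inner_right (t : ℝ) : ∫ s in a..b, R s t = Q b t - Q a t :=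
    integral_eq_sub_of_hasDerivAt (fun s _ => hQ s t)
      (Continuous.intervalIntegrable (by fun_prop) _ _)
  have integrable : MeasureTheory.IntegrableOn (Function.uncurry R)
      (Set.uIoc a b ×ˢ Set.uIoc c d) :=
    (hR.continuousOn.integrableOn_compact (isCompact_uIcc.prod isCompact_uIcc)).mono_set
      (Set.prod_mono Set.uIoc_subset_uIcc Set.uIoc_subset_uIcc)
  simpa only [inner_left, inner_right] using
    MeasureTheory.intervalIntegral_intervalIntegral_swap integrable

end Calculus

lemma exists_norm_iterate_le {X : Type*} [SeminormedAddCommGroup X] {f : X → X} {K S : Set X}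
    (hf : ∀ z ∉ K, f z = z) (hfK : Bornology.IsBounded (f '' K)) (hS : Bornology.IsBounded S) :
    ∃ C, ∀ n : ℕ, ∀ z ∈ S, ‖f^[n] z‖ ≤ C := by
  have iterate_mem (n : ℕ) (z : X) (hz : z ∈ S) : f^[n] z ∈ f '' K ∪ S := by
    induction n with
    | zero => exact Or.inr hz
    | succ n ih =>
      rw [Function.iterate_succ_apply']
      by_cases h : f^[n] z ∈ K
      · exact Or.inl ⟨_, h, rfl⟩
      · rwa [hf _ h]
  obtain ⟨C, hC⟩ := (hfK.union hS).exists_norm_le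
  exact ⟨C, fun n z hz => hC _ (iterate_mem n z hz)⟩

section Liouville

variable {E V : Type*} [NormedAddCommGroup E] [InnerProductSpace ℝ E] [NormedAddCommGroup V]
  [NormedSpace ℝ V]

/-- The integral over `[0, 1]` of the Liouville form `p·dq` along a curve in `E × E`. It unfolds to
`liouvilleIntegral d` when `E` is `EuclideanSpace ℝ (Fin d)`. -/
noncomputable def liouvilleLineIntegral (c : ℝ → E × E) : ℝ :=
  ∫ t in (0 : ℝ)..1, ⟪(c t).2, deriv (fun s => (c s).1) t⟫

/-- The action over `[0, 1]` of a curve in `E × E` for the Hamiltonian `H`. It unfolds to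
`symplecticAction d` when `E` is `EuclideanSpace ℝ (Fin d)`. -/
noncomputable def hamiltonianAction (H : ℝ × (E × E) → ℝ) (γ : ℝ → E × E) : ℝ :=
  liouvilleLineIntegral γ - ∫ t in (0 : ℝ)..1, H (t, γ t)

/-- The canonical symplectic form `dq ∧ dp` on `E × E`, with the sign for which Hamilton's equations
read `dH = ω(X_H, ·)`. -/
def symplecticForm (v w : E × E) : ℝ := ⟪v.1, w.2⟫ - ⟪v.2, w.1⟫

/-- The pullback of the Liouville form `p·dq` by `f`, at the point `x` and the tangent vector
`v`. -/
noncomputable def liouvillePullback (f : V → E × E) (x v : V) : ℝ :=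
  ⟪(f x).2, (fderiv ℝ f x v).1⟫

lemma liouvilleLineIntegral_eq {c c' : ℝ → E × E} (hc : ∀ t, HasDerivAt c (c' t) t) :
    liouvilleLineIntegral c = ∫ t in (0 : ℝ)..1, ⟪(c t).2, (c' t).1⟫ := by
  have hfst (t : ℝ) : HasDerivAt (fun s => (c s).1) (c' t).1 t :=
    (ContinuousLinearMap.fst ℝ E E).hasFDerivAt.comp_hasDerivAt t (hc t)
  simp only [liouvilleLineIntegral, (hfst _).deriv]

lemma liouvilleLineIntegral_le_mul_length {c : ℝ → E × E} (hc : ContDiff ℝ 1 c) {C : ℝ}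
    (hC : ∀ t ∈ Set.Icc (0 : ℝ) 1, ‖(c t).2‖ ≤ C) :
    liouvilleLineIntegral c ≤ C * ∫ t in (0 : ℝ)..1, ‖deriv c t‖ := by
  have hc_cont : Continuous c := hc.continuous
  have : Continuous (deriv c) := hc.continuous_deriv_one
  rw [liouvilleLineIntegral_eq fun t => (hc.differentiable_one t).hasDerivAt,
    ← integral_const_mul]
  refine integral_mono_on zero_le_one (Continuous.intervalIntegrable (by fun_prop) _ _)
    (Continuous.intervalIntegrable (by fun_prop) _ _) fun t ht => ?_
  calc ⟪(c t).2, (deriv c t).1⟫ ≤ ‖(c t).2‖ * ‖(deriv c t).1‖ := real_inner_le_norm _ _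
    _ ≤ C * ‖deriv c t‖ :=
      mul_le_mul (hC t ht) (norm_fst_le _) (norm_nonneg _) ((norm_nonneg _).trans (hC t ht))

lemma contDiff_liouvillePullback {f : V → E × E} (hf : ContDiff ℝ 2 f) (v : V) :
    ContDiff ℝ 1 (fun x => liouvillePullback f x v) :=
  (hf.of_le one_le_two).snd.inner ℝ
    ((hf.fderiv_right (m := 1) (by norm_num)).clm_apply contDiff_const).fst

lemma fderiv_liouvillePullback {f : V → E × E} (hf : ContDiff ℝ 2 f) (x v w : V) :
    fderiv ℝ (fun y => liouvillePullback f y v) x w =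
      ⟪(f x).2, (fderiv ℝ (fderiv ℝ f) x w v).1⟫ + ⟪(fderiv ℝ f x w).2, (fderiv ℝ f x v).1⟫ := by
  have hf₁ : HasFDerivAt f (fderiv ℝ f x) x := (hf.differentiable two_ne_zero x).hasFDerivAt
  have hf₂ : HasFDerivAt (fderiv ℝ f) (fderiv ℝ (fderiv ℝ f) x) x :=
    ((hf.fderiv_right (m := 1) (by norm_num)).differentiable_one x).hasFDerivAt
  have hinner := hf₁.snd.inner ℝ (hf₂.clm_apply (hasFDerivAt_const v x)).fst
  unfold liouvillePullback
  simp [hinner.fderiv]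

-- The second derivative of `f` cancels by symmetry: `d (f^* λ) = f^* (dλ)` with `dλ = -ω`.
lemma fderiv_liouvillePullback_sub {f : V → E × E} (hf : ContDiff ℝ 2 f) (x v w : V) :
    fderiv ℝ (fun y => liouvillePullback f y v) x w -
      fderiv ℝ (fun y => liouvillePullback f y w) x v =
      symplecticForm (fderiv ℝ f x v) (fderiv ℝ f x w) := by
  have hsymm : fderiv ℝ (fderiv ℝ f) x w v = fderiv ℝ (fderiv ℝ f) x v w :=
    hf.contDiffAt.isSymmSndFDerivAt (by simp) w v
  rw [fderiv_liouvillePullback hf, fderiv_liouvillePullback hf, hsymm, symplecticForm,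
    real_inner_comm (fderiv ℝ f x v).1]
  ring

end Liouville

section HamiltonianFlow

variable {E : Type*} [NormedAddCommGroup E] [InnerProductSpace ℝ E] {H : ℝ × (E × E) → ℝ}
  {φ : ℝ × (E × E) → E × E}

/-- `φ` is the flow on `E × E` of the time-dependent Hamiltonian `H`. Hamilton's equations are
encoded as `dH_t = ω(∂_t φ, ·)`, which makes sense without gradients and hence without completeness
of `E`. -/
structure IsHamiltonianFlow (H : ℝ × (E × E) → ℝ) (φ : ℝ × (E × E) → E × E) : Prop where
  map_zero : ∀ z, φ (0, z) = z
  fderiv_eq_symplecticForm : ∀ t z v,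
    fderiv ℝ (fun w => H (t, w)) (φ (t, z)) v = symplecticForm (deriv (fun s => φ (s, z)) t) v

/-- The time-one map of a flow. -/
def timeOneMap (φ : ℝ × (E × E) → E × E) (z : E × E) : E × E := φ (1, z)

/-- The integrand `⟨p, ∂_t q⟩ - H` of the action of the orbits of `φ`, as a function of the time and
the starting point. -/
noncomputable def actionDensity (H : ℝ × (E × E) → ℝ) (φ : ℝ × (E × E) → E × E)
    (x : ℝ × (E × E)) : ℝ :=
  liouvillePullback φ x (1, 0) - H (x.1, φ x)

lemma isHamiltonianFlow_of_deriv_eq_gradient [CompleteSpace E] (hH : Differentiable ℝ H)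
    (hφ0 : ∀ z, φ (0, z) = z)
    (hφ : ∀ t z, deriv (fun s => φ (s, z)) t =
      (gradient (fun p => H (t, ((φ (t, z)).1, p))) (φ (t, z)).2,
        -gradient (fun q => H (t, (q, (φ (t, z)).2))) (φ (t, z)).1)) :
    IsHamiltonianFlow H φ where
  map_zero := hφ0
  fderiv_eq_symplecticForm t z v := by
    have hHt : DifferentiableAt ℝ (fun w => H (t, w)) (φ (t, z)) := by fun_prop
    have hsplit : v = (0, v.2) + (v.1, 0) := by simp
    rw [hφ, symplecticForm, inner_neg_left, sub_neg_eq_add, inner_gradient_left,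
      inner_gradient_left, fderiv_comp_const_prodMk hHt, fderiv_comp_prodMk_const hHt, ← map_add,
      ← hsplit]

lemma contDiff_actionDensity (hH : ContDiff ℝ 1 H) (hφ : ContDiff ℝ 2 φ) :
    ContDiff ℝ 1 (actionDensity H φ) :=
  (contDiff_liouvillePullback hφ _).sub
    (hH.comp (contDiff_fst.prodMk (hφ.of_le one_le_two)))

lemma contDiff_timeOneMap {n : WithTop ℕ∞} (hφ : ContDiff ℝ n φ) :
    ContDiff ℝ n (timeOneMap φ) :=
  hφ.comp (contDiff_const.prodMk contDiff_id)

lemma hamiltonianAction_orbit (hH : Continuous H) (hφ : ContDiff ℝ 1 φ) (z : E × E) :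
    hamiltonianAction H (fun t => φ (t, z)) = ∫ t in (0 : ℝ)..1, actionDensity H φ (t, z) := by
  have hφ_cont : Continuous φ := hφ.continuous
  have : Continuous (fderiv ℝ φ) := hφ.continuous_fderiv one_ne_zero
  rw [hamiltonianAction, liouvilleLineIntegral_eq fun t =>
    hasDerivAt_comp_prodMk_const (hφ.differentiable_one (t, z))]
  exact (integral_sub (Continuous.intervalIntegrable (by fun_prop) _ _)
    (Continuous.intervalIntegrable (by fun_prop) _ _)).symm

lemma liouvilleLineIntegral_flow_comp (hφ : ContDiff ℝ 1 φ) {c : ℝ → E × E}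
    (hc : Differentiable ℝ c) (t : ℝ) :
    liouvilleLineIntegral (fun s => φ (t, c s)) =
      ∫ s in (0 : ℝ)..1, liouvillePullback φ (t, c s) (0, deriv c s) :=
  liouvilleLineIntegral_eq fun s =>
    hasDerivAt_comp_const_prodMk (hφ.differentiable_one _) (hc s).hasDerivAt

lemma IsHamiltonianFlow.fderiv_actionDensity (hflow : IsHamiltonianFlow H φ)
    (hH : ContDiff ℝ 1 H) (hφ : ContDiff ℝ 2 φ) (t : ℝ) (z v : E × E) :
    fderiv ℝ (actionDensity H φ) (t, z) (0, v) =
      fderiv ℝ (fun x => liouvillePullback φ x (0, v)) (t, z) (1, 0) := by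
  have hφ_diff : Differentiable ℝ φ := hφ.differentiable two_ne_zero
  have hpull : Differentiable ℝ (fun x => liouvillePullback φ x (1, 0)) :=
    (contDiff_liouvillePullback hφ _).differentiable_one
  have hHφ : Differentiable ℝ (fun x : ℝ × (E × E) => H (x.1, φ x)) :=
    hH.differentiable_one.comp (differentiable_fst.prodMk hφ_diff)
  have hamilton : fderiv ℝ (fun x : ℝ × (E × E) => H (x.1, φ x)) (t, z) (0, v) =
      symplecticForm (fderiv ℝ φ (t, z) (1, 0)) (fderiv ℝ φ (t, z) (0, v)) := by
    rw [← (hasDerivAt_comp_prodMk_const (hφ_diff (t, z))).deriv,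
      ← hflow.fderiv_eq_symplecticForm, ← fderiv_comp_const_prodMk (hHφ _),
      ← fderiv_comp_const_prodMk (hφ_diff _)]
    have hHt : DifferentiableAt ℝ (fun w => H (t, w)) (φ (t, z)) :=
      (hH.differentiable_one.comp (differentiable_const t |>.prodMk differentiable_id)) _
    have hφt : DifferentiableAt ℝ (fun w => φ (t, w)) z := by fun_prop
    exact congrArg (· v) (fderiv_comp z hHt hφt)
  have hsub : fderiv ℝ (actionDensity H φ) (t, z) =
      fderiv ℝ (fun x => liouvillePullback φ x (1, 0)) (t, z) -
        fderiv ℝ (fun x : ℝ × (E × E) => H (x.1, φ x)) (t, z) :=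
    fderiv_sub (hpull _) (hHφ _)
  rw [hsub, sub_apply, hamilton, ← fderiv_liouvillePullback_sub hφ,
    sub_sub_cancel]

lemma IsHamiltonianFlow.integral_liouvillePullback_sub (hflow : IsHamiltonianFlow H φ)
    (hH : ContDiff ℝ 1 H) (hφ : ContDiff ℝ 2 φ) {c : ℝ → E × E} (hc : ContDiff ℝ 1 c)
    (a b a' b' : ℝ) :
    ∫ s in a..b, (liouvillePullback φ (b', c s) (0, deriv c s) -
        liouvillePullback φ (a', c s) (0, deriv c s)) =
      ∫ t in a'..b', (actionDensity H φ (t, c b) - actionDensity H φ (t, c a)) := by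
  have hL : ContDiff ℝ 1 (actionDensity H φ) := contDiff_actionDensity hH hφ
  have hc_cont : Continuous c := hc.continuous
  have : Continuous (deriv c) := hc.continuous_deriv_one
  have : Continuous (fderiv ℝ (actionDensity H φ)) := hL.continuous_fderiv one_ne_zero
  refine intervalIntegral_sub_eq_of_hasDerivAt
    (P := fun s t => liouvillePullback φ (t, c s) (0, deriv c s))
    (Q := fun s t => actionDensity H φ (t, c s))
    (R := fun s t => fderiv ℝ (actionDensity H φ) (t, c s) (0, deriv c s))
    (fun s t => ?_) (fun s t => ?_) (by unfold Function.uncurry; fun_prop)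
  · rw [hflow.fderiv_actionDensity hH hφ]
    exact hasDerivAt_comp_prodMk_const ((contDiff_liouvillePullback hφ _).differentiable_one _)
  · exact hasDerivAt_comp_const_prodMk (hL.differentiable_one _)
      (hc.differentiable_one s).hasDerivAt

lemma IsHamiltonianFlow.liouvilleLineIntegral_timeOneMap_comp (hflow : IsHamiltonianFlow H φ)
    (hH : ContDiff ℝ 1 H) (hφ : ContDiff ℝ 2 φ) {c : ℝ → E × E} (hc : ContDiff ℝ 1 c) :
    liouvilleLineIntegral (timeOneMap φ ∘ c) - liouvilleLineIntegral c =
      hamiltonianAction H (fun t => φ (t, c 1)) - hamiltonianAction H (fun t => φ (t, c 0)) := by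
  have hφ_one : ContDiff ℝ 1 φ := hφ.of_le one_le_two
  have hL_cont : Continuous (actionDensity H φ) := (contDiff_actionDensity hH hφ).continuous
  have hpull_cont (t : ℝ) : Continuous fun s => liouvillePullback φ (t, c s) (0, deriv c s) := by
    have hφ_cont : Continuous φ := hφ.continuous
    have : Continuous (fderiv ℝ φ) := hφ.continuous_fderiv two_ne_zero
    have hc_cont : Continuous c := hc.continuous
    have : Continuous (deriv c) := hc.continuous_deriv_one
    unfold liouvillePullback
    fun_prop
  have at_time (t : ℝ) := liouvilleLineIntegral_flow_comp hφ_one hc.differentiable_one t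
  have at_zero : liouvilleLineIntegral c =
      ∫ s in (0 : ℝ)..1, liouvillePullback φ (0, c s) (0, deriv c s) := by
    simpa only [hflow.map_zero] using at_time 0
  have at_one : liouvilleLineIntegral (timeOneMap φ ∘ c) =
      ∫ s in (0 : ℝ)..1, liouvillePullback φ (1, c s) (0, deriv c s) := at_time 1
  rw [at_zero, at_one, hamiltonianAction_orbit hH.continuous hφ_one,
    hamiltonianAction_orbit hH.continuous hφ_one, ← integral_sub,
    hflow.integral_liouvillePullback_sub hH hφ hc, integral_sub]
  all_goals exact Continuous.intervalIntegrable (by fun_prop) _ _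

lemma IsHamiltonianFlow.liouvilleLineIntegral_iterate_comp (hflow : IsHamiltonianFlow H φ)
    (hH : ContDiff ℝ 1 H) (hφ : ContDiff ℝ 2 φ) {c : ℝ → E × E} (hc : ContDiff ℝ 1 c)
    (hc0 : Function.IsFixedPt (timeOneMap φ) (c 0))
    (hc1 : Function.IsFixedPt (timeOneMap φ) (c 1)) (n : ℕ) :
    liouvilleLineIntegral ((timeOneMap φ)^[n] ∘ c) = liouvilleLineIntegral c +
      n * (hamiltonianAction H (fun t => φ (t, c 1)) -
        hamiltonianAction H (fun t => φ (t, c 0))) := by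
  induction n with
  | zero => simp
  | succ n ih =>
    have hψ : ContDiff ℝ 1 (timeOneMap φ)^[n] :=
      contDiff_iterate (contDiff_timeOneMap (hφ.of_le one_le_two)) n
    have hstep := hflow.liouvilleLineIntegral_timeOneMap_comp hH hφ (hψ.comp hc)
    simp only [Function.comp_apply, (hc0.iterate n).eq, (hc1.iterate n).eq] at hstep
    rw [Function.iterate_succ', Function.comp_assoc, eq_add_of_sub_eq hstep, ih]
    push_cast
    ring

theorem stmt_5_general (hH : ContDiff ℝ 1 H) (hφ : ContDiff ℝ 2 φ)
    (hflow : IsHamiltonianFlow H φ) {c : ℝ → E × E} (hc : ContDiff ℝ 1 c)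
    (hc0 : Function.IsFixedPt (timeOneMap φ) (c 0))
    (hc1 : Function.IsFixedPt (timeOneMap φ) (c 1))
    (hgap : 0 < hamiltonianAction H (fun t => φ (t, c 1)) -
      hamiltonianAction H (fun t => φ (t, c 0)))
    (hbdd : ∃ C, ∀ n : ℕ, ∀ t ∈ Set.Icc (0 : ℝ) 1, ‖((timeOneMap φ)^[n] (c t)).2‖ ≤ C) :
    ∃ a > (0 : ℝ), ∃ b ≥ (0 : ℝ), ∀ n : ℕ,
      a * n - b ≤ ∫ t in (0 : ℝ)..1, ‖deriv ((timeOneMap φ)^[n] ∘ c) t‖ := by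
  obtain ⟨C, hC⟩ := hbdd
  set gap := hamiltonianAction H (fun t => φ (t, c 1)) - hamiltonianAction H (fun t => φ (t, c 0))
  have hM : 0 < max C 1 := lt_max_of_lt_right one_pos
  refine ⟨gap / max C 1, by positivity, |liouvilleLineIntegral c| / max C 1, by positivity,
    fun n => ?_⟩
  have hψ : ContDiff ℝ 1 (timeOneMap φ)^[n] :=
    contDiff_iterate (contDiff_timeOneMap (hφ.of_le one_le_two)) n
  have hle := liouvilleLineIntegral_le_mul_length (hψ.comp hc)
    fun t ht => (hC n t ht).trans (le_max_left C 1)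
  rw [hflow.liouvilleLineIntegral_iterate_comp hH hφ hc hc0 hc1] at hle
  rw [div_mul_eq_mul_div, ← sub_div, div_le_iff₀' hM]
  linarith [neg_abs_le (liouvilleLineIntegral c)]

end HamiltonianFlow

/-- Linear growth of the length of `ψⁿ∘σ` for the time-1 map `ψ` of a compactly supported
1-periodic Hamiltonian, when `σ` joins two fixed points of `ψ` whose 1-periodic orbits
have positive action difference. -/
theorem stmt_5 (d : ℕ)
    (H : ℝ × (EuclideanSpace ℝ (Fin d) × EuclideanSpace ℝ (Fin d)) → ℝ)
    (φ : ℝ × (EuclideanSpace ℝ (Fin d) × EuclideanSpace ℝ (Fin d)) →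
      EuclideanSpace ℝ (Fin d) × EuclideanSpace ℝ (Fin d))
    (hH : ContDiff ℝ (⊤ : ℕ∞) H) (hφ : ContDiff ℝ (⊤ : ℕ∞) φ)
    (hHper : ∀ t z, H (t + 1, z) = H (t, z))
    (K : Set (EuclideanSpace ℝ (Fin d) × EuclideanSpace ℝ (Fin d))) (hK : IsCompact K)
    (hHsupp : ∀ t z, z ∉ K → H (t, z) = 0)
    (hφ0 : ∀ z, φ (0, z) = z)
    (hφflow : ∀ t z, deriv (fun s => φ (s, z)) t = hamVectorField d H t (φ (t, z)))
    (hcocycle : ∀ t z, φ (t + 1, z) = φ (t, φ (1, z)))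
    (hφsupp : ∀ t z, z ∉ K → φ (t, z) = z)
    (x₀ y₀ : EuclideanSpace ℝ (Fin d) × EuclideanSpace ℝ (Fin d))
    (hx₀ : φ (1, x₀) = x₀) (hy₀ : φ (1, y₀) = y₀)
    (hgap : 0 < symplecticAction d H (fun t => φ (t, y₀)) -
      symplecticAction d H (fun t => φ (t, x₀)))
    (σ : ℝ → EuclideanSpace ℝ (Fin d) × EuclideanSpace ℝ (Fin d)) (hσ : ContDiff ℝ 1 σ)
    (hσ0 : σ 0 = x₀) (hσ1 : σ 1 = y₀) :
    ∃ a > (0:ℝ), ∃ b ≥ (0:ℝ), ∀ n : ℕ, 1 ≤ n →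
      a * n - b ≤ ∫ t in (0:ℝ)..1, ‖deriv ((fun z => φ (1, z))^[n] ∘ σ) t‖ := by
  subst hσ0 hσ1
  have hH₁ : ContDiff ℝ 1 H := mod_cast contDiff_infty.1 hH 1
  have hφ₂ : ContDiff ℝ 2 φ := mod_cast contDiff_infty.1 hφ 2
  have hflow : IsHamiltonianFlow H φ :=
    isHamiltonianFlow_of_deriv_eq_gradient hH₁.differentiable_one hφ0 hφflow
  obtain ⟨C, hC⟩ := exists_norm_iterate_le (f := timeOneMap φ) (hφsupp 1)
    (hK.image (contDiff_timeOneMap hφ).continuous).isBounded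
    (isCompact_Icc.image hσ.continuous : IsCompact (σ '' Set.Icc 0 1)).isBounded
  obtain ⟨a, ha, b, hb, hgrowth⟩ := stmt_5_general hH₁ hφ₂ hflow hσ hx₀ hy₀ hgap
    ⟨C, fun n t ht => (norm_snd_le _).trans (hC n _ ⟨t, ht, rfl⟩)⟩
  exact ⟨a, ha, b, hb, fun n _ => hgrowth n⟩
end

section
/- Let f : ℝ → ℝ be twice continuously differentiable and let M ≥ 0 satisfy |f''(r)| ≤ M for all r ∈ [0,1]. For an integer m ≥ 0 define φ_m : ℂ^N → ℂ^N by φ_m(x) = e^{2 f'(‖x‖²) m i}·x. Then φ_m is differentiable, and for every x with ‖x‖ ≤ 1 the operator norm of its real Fréchet derivative satisfies ‖Dφ_m(x)‖ ≤ 1 + 4·M·m. -/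
/-- The map `φ_m(x) = e^{2 f'(‖x‖²) m i}·x` on `ℂ^N`. -/
noncomputable def twistFlow (N : ℕ) (f : ℝ → ℝ) (t : ℝ) (x : EuclideanSpace ℂ (Fin N)) :
    EuclideanSpace ℂ (Fin N) :=
  Complex.exp (((2 * deriv f (‖x‖ ^ 2) * t : ℝ) : ℂ) * Complex.I) • x

/-! The derivative of `x ↦ e^{iθ(x)} x` is the unit scalar `e^{iθ(x)}` times the rank-one
perturbation `h ↦ h + θ'(h) i x` of the identity, so its norm is at most `1 + ‖θ'‖ ‖x‖`. For a
radial phase `θ(x) = g(‖x‖²)` the chain rule gives `‖θ'‖ = 2 |g'(‖x‖²)| ‖x‖`, and the flow of the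
Hamiltonian `f(‖x‖²)` at time `t` is the case `g = 2 t f'`. -/

section PhaseRotation

variable {E : Type*} [NormedAddCommGroup E] [NormedSpace ℂ E]

/-- The map `x ↦ e^{iθ(x)} x`, which rotates each vector of a complex space by a real phase
depending on that vector. -/
noncomputable def phaseRotation (θ : E → ℝ) (x : E) : E :=
  Complex.exp (θ x * Complex.I) • x

theorem hasFDerivAt_phaseRotation {θ : E → ℝ} {θ' : E →L[ℝ] ℝ} {x : E}
    (hθ : HasFDerivAt θ θ' x) :
    HasFDerivAt (phaseRotation θ)
      (Complex.exp (θ x * Complex.I) •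
        (ContinuousLinearMap.id ℝ E + θ'.smulRight (Complex.I • x))) x := by
  have hexp := ((Complex.ofRealCLM.hasFDerivAt.comp x hθ).mul_const Complex.I).cexp
  refine (hexp.smul (hasFDerivAt_id (𝕜 := ℝ) x)).congr_fderiv ?_
  ext h
  simp [← Complex.coe_smul (θ' h), smul_smul, mul_assoc, mul_comm, mul_left_comm]

theorem norm_fderiv_phaseRotation_le {θ : E → ℝ} {x : E} (hθ : DifferentiableAt ℝ θ x) :
    ‖fderiv ℝ (phaseRotation θ) x‖ ≤ 1 + ‖fderiv ℝ θ x‖ * ‖x‖ := by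
  rw [(hasFDerivAt_phaseRotation hθ.hasFDerivAt).fderiv, norm_smul,
    Complex.norm_exp_ofReal_mul_I, one_mul]
  calc
    ‖ContinuousLinearMap.id ℝ E + (fderiv ℝ θ x).smulRight (Complex.I • x)‖
        ≤ ‖ContinuousLinearMap.id ℝ E‖ + ‖(fderiv ℝ θ x).smulRight (Complex.I • x)‖ :=
      norm_add_le _ _
    _ ≤ 1 + ‖fderiv ℝ θ x‖ * ‖x‖ := by
      rw [ContinuousLinearMap.norm_smulRight_apply, norm_smul, Complex.norm_I, one_mul]
      gcongr
      exact ContinuousLinearMap.norm_id_le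

end PhaseRotation

section Radial

variable {F : Type*} [NormedAddCommGroup F] [InnerProductSpace ℝ F]

theorem hasFDerivAt_comp_norm_sq {g : ℝ → ℝ} {g' : ℝ} {x : F} (hg : HasDerivAt g g' (‖x‖ ^ 2)) :
    HasFDerivAt (fun y : F ↦ g (‖y‖ ^ 2)) (g' • (2 : ℝ) • innerSL ℝ x) x := by
  refine (hg.comp_hasFDerivAt x (hasStrictFDerivAt_norm_sq x).hasFDerivAt).congr_fderiv ?_
  ext h
  simp

theorem norm_fderiv_comp_norm_sq {g : ℝ → ℝ} {x : F} (hg : DifferentiableAt ℝ g (‖x‖ ^ 2)) :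
    ‖fderiv ℝ (fun y : F ↦ g (‖y‖ ^ 2)) x‖ = 2 * |deriv g (‖x‖ ^ 2)| * ‖x‖ := by
  rw [(hasFDerivAt_comp_norm_sq hg.hasDerivAt).fderiv, norm_smul, norm_smul, innerSL_apply_norm,
    Real.norm_eq_abs, Real.norm_two]
  ring

end Radial

section RadialRotation

variable {E : Type*} [NormedAddCommGroup E] [InnerProductSpace ℂ E]

theorem differentiable_phaseRotation_comp_norm_sq {g : ℝ → ℝ} (hg : Differentiable ℝ g) :
    Differentiable ℝ (phaseRotation fun x : E ↦ g (‖x‖ ^ 2)) := fun x ↦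
  have hθ : Differentiable ℝ fun y : E ↦ g (‖y‖ ^ 2) := hg.comp (differentiable_id.norm_sq ℂ)
  (hasFDerivAt_phaseRotation (hθ x).hasFDerivAt).differentiableAt

theorem norm_fderiv_phaseRotation_comp_norm_sq_le {g : ℝ → ℝ} {x : E}
    (hg : DifferentiableAt ℝ g (‖x‖ ^ 2)) :
    ‖fderiv ℝ (phaseRotation fun y : E ↦ g (‖y‖ ^ 2)) x‖ ≤
      1 + 2 * |deriv g (‖x‖ ^ 2)| * ‖x‖ ^ 2 := by
  let _ := InnerProductSpace.complexToReal (G := E)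
  have hθ := (hasFDerivAt_comp_norm_sq hg.hasDerivAt).differentiableAt
  refine (norm_fderiv_phaseRotation_le hθ).trans_eq ?_
  rw [norm_fderiv_comp_norm_sq hg]
  ring

theorem stmt_9_general {f' : ℝ → ℝ} (hf' : Differentiable ℝ f') {M : ℝ}
    (hM : ∀ r ∈ Set.Icc (0 : ℝ) 1, |deriv f' r| ≤ M) (t : ℝ) :
    Differentiable ℝ (phaseRotation fun x : E ↦ 2 * f' (‖x‖ ^ 2) * t) ∧
    ∀ x : E, ‖x‖ ≤ 1 →
      ‖fderiv ℝ (phaseRotation fun y : E ↦ 2 * f' (‖y‖ ^ 2) * t) x‖ ≤ 1 + 4 * M * |t| := by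
  let g : ℝ → ℝ := fun r ↦ 2 * f' r * t
  have hg : Differentiable ℝ g := (hf'.const_mul 2).mul_const t
  refine ⟨differentiable_phaseRotation_comp_norm_sq hg, fun x hx ↦ ?_⟩
  have hx_sq : ‖x‖ ^ 2 ≤ 1 := pow_le_one₀ (norm_nonneg x) hx
  have hderiv : |deriv g (‖x‖ ^ 2)| ≤ 2 * M * |t| := by
    rw [deriv_mul_const (hf'.const_mul 2 _), deriv_const_mul _ (hf' _), abs_mul, abs_mul, abs_two]
    gcongr
    exact hM _ ⟨sq_nonneg _, hx_sq⟩
  calc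
    ‖fderiv ℝ (phaseRotation fun y : E ↦ g (‖y‖ ^ 2)) x‖
        ≤ 1 + 2 * |deriv g (‖x‖ ^ 2)| * ‖x‖ ^ 2 :=
      norm_fderiv_phaseRotation_comp_norm_sq_le (hg _)
    _ ≤ 1 + 2 * |deriv g (‖x‖ ^ 2)| * 1 := by gcongr
    _ ≤ 1 + 2 * (2 * M * |t|) * 1 := by gcongr
    _ = 1 + 4 * M * |t| := by ring

end RadialRotation

/-- If `|f''| ≤ M` on `[0,1]`, then the time-`m` map `φ_m(x) = e^{2 f'(‖x‖²) m i}·x` is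
differentiable and its (real) Fréchet derivative satisfies `‖Dφ_m(x)‖ ≤ 1 + 4·M·m`
on the unit ball. -/
theorem stmt_9 (N : ℕ) (f : ℝ → ℝ) (hf : ContDiff ℝ 2 f) (M : ℝ) (hM : 0 ≤ M)
    (hf'' : ∀ r ∈ Set.Icc (0:ℝ) 1, |deriv (deriv f) r| ≤ M) (m : ℕ) :
    Differentiable ℝ (twistFlow N f m) ∧
    ∀ x : EuclideanSpace ℂ (Fin N), ‖x‖ ≤ 1 →
      ‖fderiv ℝ (twistFlow N f m) x‖ ≤ 1 + 4 * M * m := by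
  have h := stmt_9_general (E := EuclideanSpace ℂ (Fin N)) hf.differentiable_deriv_two hf'' m
  rwa [Nat.abs_cast] at h
end

section
/- Let f : ℝ → ℝ be twice continuously differentiable, let e₁ be the first standard basis vector of ℂ^N, let b > 0, and for an integer m ≥ 0 let c_m : [0,b] → ℂ^N be the curve c_m(t) = e^{2 f'(t²) m i}·(t·e₁). Then c_m is differentiable with ‖c_m'(t)‖ = √(1 + 16 m² f''(t²)² t⁴) for every t ∈ [0,b], and consequently its length satisfies ∫₀^b ‖c_m'(t)‖ dt ≥ 4m·∫₀^b |f''(t²)| t² dt. In particular, if f'' does not vanish identically on (0,b²), the length of c_m grows at least linearly in m. -/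
/-- The curve `c_m(t) = e^{2 f'(t²) m i}·(t·e₁)` in `ℂ^N`, the image of the radial segment
`t ↦ t·e₁` under the time-`m` map of the Hamiltonian flow of `H(x) = f(‖x‖²)`. -/
noncomputable def radialCurve (N : ℕ) (hN : 0 < N) (f : ℝ → ℝ) (m : ℕ) (t : ℝ) :
    EuclideanSpace ℂ (Fin N) :=
  Complex.exp (((2 * deriv f (t ^ 2) * m : ℝ) : ℂ) * Complex.I) •
    ((t : ℂ) • EuclideanSpace.single (⟨0, hN⟩ : Fin N) (1 : ℂ))

/-! In the complex line spanned by `v`, the velocity of `e^{iθ}·(r·v)` is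
`e^{iθ} (r' + i r θ')·v`: the radial part `r'` and the angular part `r θ'` are orthogonal, so the
speed is `√(r'² + (r θ')²) ‖v‖`, which is at least `|r θ'| ‖v‖`. For `r = t` and `θ = 2 m f'(t²)`
the angular part is `4 m f''(t²) t²`. -/

section PolarCurve

variable {E : Type*} [NormedAddCommGroup E] [NormedSpace ℂ E] {r θ : ℝ → ℝ} {r' θ' a b t : ℝ}

/-- The curve with polar coordinates `(r, θ)` in the complex line spanned by `v`. The radius `r`
may take negative values. -/
noncomputable def polarCurve (r θ : ℝ → ℝ) (v : E) (t : ℝ) : E :=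
  Complex.exp (θ t * Complex.I) • ((r t : ℂ) • v)

theorem hasDerivAt_polarCurve (hr : HasDerivAt r r' t) (hθ : HasDerivAt θ θ' t) (v : E) :
    HasDerivAt (polarCurve r θ v)
      ((Complex.exp (θ t * Complex.I) * (r' + (r t * θ' : ℝ) * Complex.I)) • v) t := by
  have hcoord : HasDerivAt (fun s : ℝ => Complex.exp (θ s * Complex.I) * (r s : ℂ))
      (Complex.exp (θ t * Complex.I) * (r' + (r t * θ' : ℝ) * Complex.I)) t := by
    refine ((hθ.ofReal_comp.mul_const Complex.I).cexp.mul hr.ofReal_comp).congr_deriv ?_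
    push_cast
    ring
  exact (hcoord.smul_const v).congr_of_eventuallyEq (.of_forall fun s => smul_smul _ _ v)

theorem norm_deriv_polarCurve (hr : DifferentiableAt ℝ r t) (hθ : DifferentiableAt ℝ θ t)
    (v : E) :
    ‖deriv (polarCurve r θ v) t‖ = √(deriv r t ^ 2 + (r t * deriv θ t) ^ 2) * ‖v‖ := by
  rw [(hasDerivAt_polarCurve hr.hasDerivAt hθ.hasDerivAt v).deriv, norm_smul, norm_mul,
    Complex.norm_exp_ofReal_mul_I, one_mul, Complex.norm_add_mul_I]

theorem abs_mul_deriv_mul_norm_le_norm_deriv_polarCurve (hr : DifferentiableAt ℝ r t)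
    (hθ : DifferentiableAt ℝ θ t) (v : E) :
    |r t * deriv θ t| * ‖v‖ ≤ ‖deriv (polarCurve r θ v) t‖ := by
  rw [norm_deriv_polarCurve hr hθ]
  gcongr
  exact Real.abs_le_sqrt (le_add_of_nonneg_left (sq_nonneg _))

theorem integral_abs_mul_deriv_mul_norm_le_integral_norm_deriv_polarCurve
    (hab : a ≤ b) (hr : ∀ t ∈ Set.Ioc a b, DifferentiableAt ℝ r t)
    (hθ : ∀ t ∈ Set.Ioc a b, DifferentiableAt ℝ θ t) (v : E)
    (hlen : IntervalIntegrable (fun t => ‖deriv (polarCurve r θ v) t‖) MeasureTheory.volume a b) :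
    ∫ t in a..b, |r t * deriv θ t| * ‖v‖ ≤ ∫ t in a..b, ‖deriv (polarCurve r θ v) t‖ := by
  refine (Real.le_norm_self _).trans (intervalIntegral.norm_integral_le_of_norm_le hab ?_ hlen)
  refine .of_forall fun t ht => ?_
  rw [Real.norm_of_nonneg (by positivity)]
  exact abs_mul_deriv_mul_norm_le_norm_deriv_polarCurve (hr t ht) (hθ t ht) v

theorem contDiff_polarCurve {n : WithTop ℕ∞} (hr : ContDiff ℝ n r) (hθ : ContDiff ℝ n θ) (v : E) :
    ContDiff ℝ n (polarCurve r θ v) := by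
  have hofReal : ContDiff ℝ n ((↑) : ℝ → ℂ) := Complex.ofRealCLM.contDiff
  exact ((hofReal.comp hθ).mul contDiff_const).cexp.smul ((hofReal.comp hr).smul contDiff_const)

end PolarCurve

section RadialFlow

variable {E : Type*} [NormedAddCommGroup E] [NormedSpace ℂ E] {g : ℝ → ℝ}

/-- The phase by which the time-`m` map of the Hamiltonian flow of `H(x) = f(‖x‖²)` rotates the
sphere of radius `|t|`, where `g` stands for `f'`. For a unit vector `v`, the image of the segment
`t ↦ t·v` under this map is `polarCurve id (radialPhase g m) v`, which for `v = e₁` is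
`radialCurve`. -/
noncomputable def radialPhase (g : ℝ → ℝ) (m t : ℝ) : ℝ :=
  2 * g (t ^ 2) * m

theorem hasDerivAt_radialPhase {t : ℝ} (hg : DifferentiableAt ℝ g (t ^ 2)) (m : ℝ) :
    HasDerivAt (radialPhase g m) (4 * m * deriv g (t ^ 2) * t) t := by
  have hsq : HasDerivAt (fun s : ℝ => s ^ 2) (2 * t) t := by simpa using hasDerivAt_pow 2 t
  have hcomp : HasDerivAt (fun s : ℝ => g (s ^ 2)) (deriv g (t ^ 2) * (2 * t)) t :=
    hg.hasDerivAt.comp (h := fun s => s ^ 2) t hsq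
  exact ((hcomp.const_mul 2).mul_const m).congr_deriv (by ring)

theorem contDiff_radialPhase {n : WithTop ℕ∞} (hg : ContDiff ℝ n g) (m : ℝ) :
    ContDiff ℝ n (radialPhase g m) :=
  (contDiff_const.mul (hg.comp (contDiff_id.pow 2))).mul contDiff_const

theorem stmt_10_general (hg : Differentiable ℝ g) (m : ℝ) {v : E} (hv : ‖v‖ = 1) :
    Differentiable ℝ (polarCurve id (radialPhase g m) v) ∧
    (∀ t, ‖deriv (polarCurve id (radialPhase g m) v) t‖ =
      √(1 + 16 * m ^ 2 * deriv g (t ^ 2) ^ 2 * t ^ 4)) ∧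
    ∀ a b, a ≤ b →
      IntervalIntegrable (fun t => ‖deriv (polarCurve id (radialPhase g m) v) t‖)
        MeasureTheory.volume a b →
      4 * |m| * ∫ t in a..b, |deriv g (t ^ 2)| * t ^ 2 ≤
        ∫ t in a..b, ‖deriv (polarCurve id (radialPhase g m) v) t‖ := by
  have hphase (t : ℝ) := hasDerivAt_radialPhase (hg (t ^ 2)) m
  have hphase_diff (t : ℝ) := (hphase t).differentiableAt
  refine ⟨fun t => (hasDerivAt_polarCurve (hasDerivAt_id t) (hphase t) v).differentiableAt,
    fun t => ?_, fun a b hab hlen => ?_⟩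
  · rw [norm_deriv_polarCurve differentiableAt_id (hphase_diff t), (hphase t).deriv, deriv_id, hv,
      mul_one, id]
    congr 1
    ring
  · have hangular (t : ℝ) : |id t * deriv (radialPhase g m) t| * ‖v‖ =
        4 * |m| * (|deriv g (t ^ 2)| * t ^ 2) := by
      rw [(hphase t).deriv, hv, mul_one, id]
      simp only [abs_mul, Nat.abs_ofNat]
      linear_combination 4 * |m| * |deriv g (t ^ 2)| * abs_mul_abs_self t
    have hle := integral_abs_mul_deriv_mul_norm_le_integral_norm_deriv_polarCurve hab
      (fun _ _ => differentiableAt_id) (fun t _ => hphase_diff t) v hlen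
    simpa only [hangular, intervalIntegral.integral_const_mul] using hle

end RadialFlow

/-- The curve `c_m` is differentiable with `‖c_m'(t)‖ = √(1 + 16 m² f''(t²)² t⁴)` on `[0,b]`,
and its length is at least `4m·∫₀^b |f''(t²)| t² dt`. -/
theorem stmt_10 (N : ℕ) (hN : 0 < N) (f : ℝ → ℝ) (hf : ContDiff ℝ 2 f)
    (b : ℝ) (hb : 0 < b) (m : ℕ) :
    Differentiable ℝ (radialCurve N hN f m) ∧
    (∀ t ∈ Set.Icc (0:ℝ) b, ‖deriv (radialCurve N hN f m) t‖ =
      Real.sqrt (1 + 16 * (m : ℝ) ^ 2 * (deriv (deriv f) (t ^ 2)) ^ 2 * t ^ 4)) ∧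
    4 * (m : ℝ) * ∫ t in (0:ℝ)..b, |deriv (deriv f) (t ^ 2)| * t ^ 2 ≤
      ∫ t in (0:ℝ)..b, ‖deriv (radialCurve N hN f m) t‖ := by
  have hf' : ContDiff ℝ 1 (deriv f) := hf.deriv'
  have hcurve : ContDiff ℝ 1 (radialCurve N hN f m) :=
    contDiff_polarCurve contDiff_id (contDiff_radialPhase hf' m) _
  obtain ⟨hdiff, hspeed, hlength⟩ := stmt_10_general (hf'.differentiable one_ne_zero) m
    (v := EuclideanSpace.single (⟨0, hN⟩ : Fin N) (1 : ℂ)) (by simp)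
  rw [Nat.abs_cast] at hlength
  exact ⟨hdiff, fun t _ => hspeed t,
    hlength 0 b hb.le ((hcurve.continuous_deriv le_rfl).norm.intervalIntegrable 0 b)⟩
end
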